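/- Let n ≥ 3 and let A be the adjacency matrix of the n-cycle, i.e., A_{ij} = 1 if j ≡ i+1 or j ≡ i−1 (mod n) and A_{ij} = 0 otherwise. Then the set of n×n real matrices X with all entries in [0,1], all row sums equal to 1, all column sums equal to 1, and AX = XA is exactly the permutation polytope P(D_n). -/

import Mathlib

/-!
Index rows and columns by `ℤ/n`, that is by `Fin (m + 1)` with its cyclic addition. Since `n ≥ 3`,
commuting with the adjacency matrix of the cycle is the discrete wave equation
`X (i+1) j + X (i-1) j = X i (j+1) + X i (j-1)` (`commute_iff_wave`). The permutation matrices of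
the dihedral group are the indicators of the diagonals `j - i = c` and the antidiagonals
`i + j = c`; they satisfy this linear equation, which gives the inclusion of the polytope.

Conversely, the equation says that the diagonal difference `X (i+1) (j+1) - X i j` depends only on
`i + j` (`diag_diff`). Let `b s` be the minimum of `X` on the antidiagonal `i + j = s`. Moving from
the antidiagonal `s` to `s + 2` along the diagonals changes all entries, hence also the minimum, by
the same amount, so `X i j - b (i + j)` is constant on diagonals. Hence `X i j = a (j - i) + b (i + j)`
with `a, b ≥ 0` (`dAlembert`), and the weights `a`, `b` sum to `1` because row `0` of `X` does.
Taking the minimum makes a distinction by the parity of `n` unnecessary, although for even `n` the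
functions `a` and `b` are determined only up to one constant for each parity class.
-/

/-- The permutation matrix of a permutation `g` of `Fin n`. -/
noncomputable def permMatrix (n : ℕ) (g : Equiv.Perm (Fin n)) :
    Matrix (Fin n) (Fin n) ℝ :=
  Matrix.of fun i j => if g i = j then (1 : ℝ) else 0

/-- The permutation polytope of a set of permutations. -/
noncomputable def permPolytope (n : ℕ) (G : Set (Equiv.Perm (Fin n))) :
    Set (Matrix (Fin n) (Fin n) ℝ) :=
  convexHull ℝ (permMatrix n '' G)

/-- The dihedral group of permutations of `Fin n`, generated by the rotation
`finRotate n` and the reflection `Fin.revPerm`. -/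
def dihedralSet (n : ℕ) : Set (Equiv.Perm (Fin n)) :=
  {g | ∃ k : ℕ, g = (finRotate n) ^ k ∨ g = Fin.revPerm * (finRotate n) ^ k}

/-- The reflection `i ↦ c - i` of the cycle `Fin (m + 1)`. -/
def cycleReflection {m : ℕ} (c : Fin (m + 1)) : Equiv.Perm (Fin (m + 1)) := Equiv.subLeft c

lemma finRotate_pow_apply {m : ℕ} (k : ℕ) (i : Fin (m + 1)) :
    (finRotate (m + 1) ^ k) i = i + Fin.ofNat (m + 1) k := by
  induction k with
  | zero => ext; simp
  | succ k ih =>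
    rw [pow_succ', Equiv.Perm.mul_apply, ih, finRotate_apply]
    have : Fin.ofNat (m + 1) (k + 1) = Fin.ofNat (m + 1) k + 1 := by
      ext; simp [Fin.val_add]
    rw [this]; abel

lemma rev_eq_sub {m : ℕ} (i : Fin (m + 1)) : Fin.rev i = -1 - i := by
  have h : Fin.rev i + i + 1 = 0 := by
    ext
    have := i.isLt
    simp only [Fin.val_add, Fin.val_rev, Fin.val_zero, Fin.val_one']
    have e : m + 1 - (i.val + 1) + i.val = m := by omega
    rw [e]; simp
  rw [eq_sub_iff_add_eq, eq_neg_iff_add_eq_zero, h]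

/-- The dihedral group consists of the translations and the reflections of `ℤ/n`. -/
lemma mem_dihedralSet_iff {m : ℕ} (g : Equiv.Perm (Fin (m + 1))) :
    g ∈ dihedralSet (m + 1) ↔ ∃ c, g = Equiv.addRight c ∨ g = cycleReflection c := by
  constructor
  · rintro ⟨k, rfl | rfl⟩
    · refine ⟨Fin.ofNat (m + 1) k, Or.inl ?_⟩
      ext1 i
      exact finRotate_pow_apply k i
    · refine ⟨-1 - Fin.ofNat (m + 1) k, Or.inr ?_⟩
      ext1 i
      rw [Equiv.Perm.mul_apply, finRotate_pow_apply, Fin.revPerm_apply, rev_eq_sub]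
      change _ = -1 - Fin.ofNat (m + 1) k - i
      abel
  · rintro ⟨c, rfl | rfl⟩
    · refine ⟨c.val, Or.inl ?_⟩
      ext1 i
      rw [finRotate_pow_apply, Fin.ofNat_val_eq_self]; rfl
    · -- The reflection `i ↦ -1 - (i + k)` equals `i ↦ c - i` for `k = -1 - c`.
      refine ⟨(-1 - c).val, Or.inr ?_⟩
      ext1 i
      rw [Equiv.Perm.mul_apply, finRotate_pow_apply, Fin.revPerm_apply, rev_eq_sub,
        Fin.ofNat_val_eq_self]
      change c - i = _
      abel

/-- Commuting with the adjacency matrix of the `n`-cycle is the discrete wave equation. The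
hypothesis `n ≥ 3` makes the two neighbours `i + 1` and `i - 1` distinct. -/
lemma commute_iff_wave {m : ℕ} (hm : 2 ≤ m) (A X : Matrix (Fin (m + 1)) (Fin (m + 1)) ℝ)
    (hA : ∀ i j, A i j =
      if (finRotate (m + 1)) i = j ∨ (finRotate (m + 1)) j = i then 1 else 0) :
    A * X = X * A ↔
      ∀ i j, X (i + 1) j + X (i - 1) j = X i (j + 1) + X i (j - 1) := by
  have two : (1 : Fin (m + 1)) + 1 ≠ 0 := by
    intro h
    have := congrArg Fin.val h
    simp only [Fin.val_add, Fin.val_one', Fin.val_zero] at this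
    rw [Nat.mod_eq_of_lt (show 1 < m + 1 by omega), Nat.mod_eq_of_lt (by omega)] at this
    omega
  have ne : ∀ i : Fin (m + 1), i + 1 ≠ i - 1 := by
    intro i h
    apply two
    have : i + (1 + 1) = i := by
      rw [← add_assoc, h, sub_add_cancel]
    simpa using this
  have hA1 : ∀ i j, A i j = (if j = i + 1 then 1 else 0) + (if j = i - 1 then 1 else 0) := by
    intro i j
    rw [hA, finRotate_apply, finRotate_apply]
    have e : j + 1 = i ↔ j = i - 1 := eq_sub_iff_add_eq.symm
    simp only [e, eq_comm (a := i + 1)]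
    by_cases h1 : j = i + 1
    · subst h1; simp [ne i]
    · simp [h1]
  have hA2 : ∀ i j, A i j = (if i = j + 1 then 1 else 0) + (if i = j - 1 then 1 else 0) := by
    intro i j
    rw [hA1, add_comm]
    have e1 : j = i - 1 ↔ i = j + 1 := by rw [eq_sub_iff_add_eq, eq_comm]
    have e2 : j = i + 1 ↔ i = j - 1 := by rw [eq_sub_iff_add_eq, eq_comm]
    simp only [e1, e2]
  have hL : ∀ i j, (A * X) i j = X (i + 1) j + X (i - 1) j := by
    intro i j
    simp [Matrix.mul_apply, hA1, add_mul, Finset.sum_add_distrib]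
  have hR : ∀ i j, (X * A) i j = X i (j + 1) + X i (j - 1) := by
    intro i j
    simp [Matrix.mul_apply, hA2, mul_add, Finset.sum_add_distrib]
  rw [← Matrix.ext_iff]
  simp only [hL, hR]

lemma eq_apply_zero_of_succ {m : ℕ} (φ : Fin (m + 1) → ℝ) (h : ∀ i, φ (i + 1) = φ i)
    (i : Fin (m + 1)) : φ i = φ 0 := by
  induction i using Fin.induction with
  | zero => rfl
  | succ i ih => rw [← Fin.coeSucc_eq_succ, h, ih]

/-- For a solution of the wave equation, the difference along a diagonal step depends only on the
antidiagonal `i + j = s` on which the step starts. -/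
lemma diag_diff {m : ℕ} (X : Matrix (Fin (m + 1)) (Fin (m + 1)) ℝ)
    (hX : ∀ i j, X (i + 1) j + X (i - 1) j = X i (j + 1) + X i (j - 1))
    (s i : Fin (m + 1)) :
    X (i + 1) (s - i + 1) - X i (s - i) = X (0 + 1) (s - 0 + 1) - X 0 (s - 0) := by
  refine eq_apply_zero_of_succ (fun i => X (i + 1) (s - i + 1) - X i (s - i)) ?_ i
  intro i
  have h := hX (i + 1) (s - i)
  have e1 : s - (i + 1) + 1 = s - i := by abel
  have e2 : s - (i + 1) = s - i - 1 := by abel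
  have e3 : i + 1 - 1 = i := by abel
  simp only [e1]
  rw [e2]
  rw [e3] at h
  linarith

/-- D'Alembert decomposition: a nonnegative solution of the wave equation on the discrete torus is
a sum of nonnegative travelling waves in the two directions. -/
lemma dAlembert {m : ℕ} (X : Matrix (Fin (m + 1)) (Fin (m + 1)) ℝ)
    (h0 : ∀ i j, 0 ≤ X i j)
    (hX : ∀ i j, X (i + 1) j + X (i - 1) j = X i (j + 1) + X i (j - 1)) :
    ∃ a b : Fin (m + 1) → ℝ, (∀ p, 0 ≤ a p) ∧ (∀ s, 0 ≤ b s) ∧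
      ∀ i j, X i j = a (j - i) + b (i + j) := by
  set b : Fin (m + 1) → ℝ := fun s => ⨅ t, X t (s - t) with hb
  have bdd : ∀ f : Fin (m + 1) → ℝ, BddBelow (Set.range f) := fun f =>
    (Set.finite_range f).bddBelow
  have b_le : ∀ s t, b s ≤ X t (s - t) := fun s t => ciInf_le (bdd _) t
  have b_step : ∀ s, b (s + 1 + 1) = b s + (X (0 + 1) (s - 0 + 1) - X 0 (s - 0)) := by
    intro s
    simp only [hb]
    rw [ciInf_add (bdd _)]
    symm
    refine Equiv.iInf_congr (Equiv.addRight 1) ?_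
    intro t
    rw [← diag_diff X hX s t]
    change X (t + 1) (s + 1 + 1 - (t + 1)) = _
    have e : s + 1 + 1 - (t + 1) = s - t + 1 := by abel
    rw [e]; ring
  refine ⟨fun p => X 0 p - b p, b, ?_, ?_, ?_⟩
  · intro p
    have := b_le p 0
    rw [sub_zero] at this
    exact sub_nonneg.2 this
  · exact fun s => le_ciInf fun t => h0 _ _
  · intro i j
    -- `X - b` is constant along the diagonal through `(0, j - i)` and `(i, j)`.
    have key := eq_apply_zero_of_succ
      (fun t => X t (j - i + t) - b (t + (j - i + t))) (by
        intro t
        have h1 := b_step (t + (j - i + t))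
        have h2 := diag_diff X hX (t + (j - i + t)) t
        have e1 : t + 1 + (j - i + (t + 1)) = t + (j - i + t) + 1 + 1 := by abel
        have e2 : t + (j - i + t) - t = j - i + t := by abel
        rw [e2] at h2
        simp only [e1]
        rw [← add_assoc (j - i) t 1]
        linarith) i
    simp only [sub_add_cancel, add_zero, zero_add] at key
    change X i j = X 0 (j - i) - b (j - i) + b (i + j)
    linarith

lemma permMatrix_wave {m : ℕ} {g : Equiv.Perm (Fin (m + 1))} (hg : g ∈ dihedralSet (m + 1))
    (i j : Fin (m + 1)) :
    permMatrix (m + 1) g (i + 1) j + permMatrix (m + 1) g (i - 1) j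
      = permMatrix (m + 1) g i (j + 1) + permMatrix (m + 1) g i (j - 1) := by
  obtain ⟨c, rfl | rfl⟩ := (mem_dihedralSet_iff g).1 hg
  · have e1 : i + 1 + c = j ↔ i + c = j - 1 := by
      rw [eq_sub_iff_add_eq, add_right_comm]
    have e2 : i - 1 + c = j ↔ i + c = j + 1 := by
      rw [← sub_eq_iff_eq_add, sub_add_eq_add_sub]
    simp only [permMatrix, Matrix.of_apply, Equiv.coe_addRight, e1, e2]
    exact add_comm _ _
  · have e1 : c - (i + 1) = j ↔ c - i = j + 1 := by
      rw [← sub_eq_iff_eq_add, sub_sub]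
    have e2 : c - (i - 1) = j ↔ c - i = j - 1 := by
      rw [eq_sub_iff_add_eq, ← sub_add]
    simp only [permMatrix, cycleReflection, Matrix.of_apply, Equiv.subLeft_apply, e1, e2]

/-- Let `A` be the adjacency matrix of the `n`-cycle (`A i j = 1` iff `j = i ± 1 (mod n)`).
The doubly stochastic matrices commuting with `A` form exactly the polytope `P(D_n)`. -/
theorem dihedral_polytope_eq_commuting_doubly_stochastic (n : ℕ) (hn : 3 ≤ n)
    (A : Matrix (Fin n) (Fin n) ℝ)
    (hA : ∀ i j, A i j = if (finRotate n) i = j ∨ (finRotate n) j = i then 1 else 0) :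
    {X : Matrix (Fin n) (Fin n) ℝ |
        (∀ i j, X i j ∈ Set.Icc (0 : ℝ) 1)
        ∧ (∀ i, ∑ j, X i j = 1)
        ∧ (∀ j, ∑ i, X i j = 1)
        ∧ A * X = X * A}
      = permPolytope n (dihedralSet n) := by
  obtain ⟨m, rfl⟩ : ∃ m, n = m + 1 := ⟨n - 1, by omega⟩
  have hm : 2 ≤ m := by omega
  apply Set.Subset.antisymm
  · rintro X ⟨hI, hrow, -, hcomm⟩
    rw [commute_iff_wave hm A X hA] at hcomm
    obtain ⟨a, b, ha, hb, hX⟩ := dAlembert X (fun i j => (hI i j).1) hcomm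
    have hsum : ∑ p, a p + ∑ s, b s = 1 := by
      rw [← hrow 0, ← Finset.sum_add_distrib]
      exact Finset.sum_congr rfl fun j _ => by rw [hX, sub_zero, zero_add]
    have hX' : X = ∑ k : Fin (m + 1) ⊕ Fin (m + 1), Sum.elim a b k •
        permMatrix (m + 1) (Sum.elim (fun c => Equiv.addRight c) cycleReflection k) := by
      ext i j
      have e1 : ∀ p, i + p = j ↔ p = j - i := fun p => by
        rw [eq_sub_iff_add_eq, add_comm i p]
      have e2 : ∀ s, s - i = j ↔ s = i + j := fun s => by
        rw [sub_eq_iff_eq_add, add_comm j i]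
      simp [hX i j, Matrix.sum_apply, permMatrix, cycleReflection, e1, e2]
    rw [hX']
    refine (convex_convexHull ℝ _).sum_mem ?_ ?_ ?_
    · rintro (k | k) - <;> simp [ha, hb]
    · simpa using hsum
    · intro k _
      refine subset_convexHull ℝ _ ⟨_, (mem_dihedralSet_iff _).2 ?_, rfl⟩
      rcases k with c | c
      · exact ⟨c, Or.inl rfl⟩
      · exact ⟨c, Or.inr rfl⟩
  · refine convexHull_min ?_ ?_
    · rintro _ ⟨g, hg, rfl⟩
      refine ⟨fun i j => ?_, fun i => ?_, fun j => ?_, ?_⟩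
      · simp only [permMatrix, Matrix.of_apply]
        split_ifs <;> simp
      · simp [permMatrix]
      · simp [permMatrix, ← Equiv.eq_symm_apply]
      · exact (commute_iff_wave hm A _ hA).2 (permMatrix_wave hg)
    · rintro X ⟨hX1, hX2, hX3, hX4⟩ Y ⟨hY1, hY2, hY3, hY4⟩ u v hu hv huv
      refine ⟨fun i j => ?_, fun i => ?_, fun j => ?_, ?_⟩
      · exact convex_Icc (0 : ℝ) 1 (hX1 i j) (hY1 i j) hu hv huv
      · simp [Finset.sum_add_distrib, ← Finset.mul_sum, hX2, hY2, huv]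
      · simp [Finset.sum_add_distrib, ← Finset.mul_sum, hX3, hY3, huv]
      · simp [mul_add, add_mul, hX4, hY4]
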